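/- For every complex number q with 0 < |q| < 1, one has ∑_{i,j,k,l ≥ 0} q^{4i²+4j²+4k²+5l²−4il−4jl+4kl} / ((q⁸;q⁸)_i (q⁸;q⁸)_j (q⁸;q⁸)_k (q⁸;q⁸)_l) = J_8⁷ J_{4,40} J_{32,80} / (J_4⁴ J_16⁴ J_80) + 4q⁵ · J_16³ J_{16,80} / J_8⁴. (This is the paper's identity F(1, 1, 1, 1; q²) = J_2⁷ J_{1,10} J_{8,20}/(J_1⁴ J_4⁴ J_20) + 4q^{5/4} J_4³ J_{4,20}/J_2⁴, with q replaced by q⁴ throughout to clear fractional exponents.) -/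

import Mathlib

open scoped BigOperators

/-- The infinite q-Pochhammer symbol `(a; q)_∞ = ∏_{k=0}^∞ (1 - a q^k)`. -/
noncomputable def qPochInf (a q : ℂ) : ℂ := ∏' n : ℕ, (1 - a * q ^ n)

/-- The finite q-Pochhammer symbol `(a; q)_n = ∏_{k=0}^{n-1} (1 - a q^k)`. -/
noncomputable def qPoch (a q : ℂ) (n : ℕ) : ℂ :=
  Finset.prod (Finset.range n) (fun k => 1 - a * q ^ k)

/-- `J_m = (q^m; q^m)_∞`. -/
noncomputable def J (q : ℂ) (m : ℕ) : ℂ := qPochInf (q ^ m) (q ^ m)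

/-- `J_{a,m} = (q^a; q^m)_∞ (q^{m-a}; q^m)_∞ (q^m; q^m)_∞`. -/
noncomputable def Jam (q : ℂ) (a m : ℕ) : ℂ :=
  qPochInf (q ^ a) (q ^ m) * qPochInf (q ^ (m - a)) (q ^ m) * qPochInf (q ^ m) (q ^ m)

/-!
Euler's expansion carries out the sums over `i`, `j` and `k`, leaving
`q ^ (5 l²) / (q⁸; q⁸)_l` times infinite products shifted by powers of `q ^ (4 l)`. After splitting
by the parity of `l`, the shifts turn into finite `q`-Pochhammer symbols, and the even and odd parts
become the Rogers–Ramanujan type sums (19), at `-q⁴`, and (44), at `q⁸`, of Slater's list. Both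
follow from the limiting case of Bailey's lemma and the Jacobi triple product. The Bailey pairs
needed are closed forms of truncated theta sums, and like the `q`-binomial theorem they are obtained
from recurrences in the truncation indices.
-/

open Filter Topology

section Pochhammer

lemma norm_pow_lt_one {x : ℂ} (hx : ‖x‖ < 1) {n : ℕ} (hn : n ≠ 0) : ‖x ^ n‖ < 1 := by
  rw [norm_pow]
  exact pow_lt_one₀ (norm_nonneg _) hx hn

lemma mul_pow_ne_one {a x : ℂ} (ha : ‖a‖ < 1) (hx : ‖x‖ < 1) (n : ℕ) : a * x ^ n ≠ 1 := by
  refine ne_of_apply_ne norm (ne_of_lt ?_)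
  rw [norm_mul, norm_pow, norm_one]
  exact mul_lt_one_of_nonneg_of_lt_one_left (norm_nonneg _) ha
    (pow_le_one₀ (norm_nonneg _) hx.le)

lemma summable_norm_neg_mul_pow (a : ℂ) {x : ℂ} (hx : ‖x‖ < 1) :
    Summable fun n : ℕ => ‖-(a * x ^ n)‖ := by
  simp only [norm_neg, norm_mul, norm_pow]
  exact (summable_geometric_of_lt_one (norm_nonneg _) hx).mul_left _

lemma multipliable_one_sub_mul_pow (a : ℂ) {x : ℂ} (hx : ‖x‖ < 1) :
    Multipliable fun n : ℕ => 1 - a * x ^ n := by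
  simpa only [sub_eq_add_neg] using
    multipliable_one_add_of_summable (summable_norm_neg_mul_pow a hx)

lemma tendsto_qPoch (a : ℂ) {x : ℂ} (hx : ‖x‖ < 1) :
    Tendsto (qPoch a x) atTop (𝓝 (qPochInf a x)) :=
  (multipliable_one_sub_mul_pow a hx).hasProd.tendsto_prod_nat

lemma qPoch_zero (a x : ℂ) : qPoch a x 0 = 1 := Finset.prod_range_zero _

lemma qPoch_succ (a x : ℂ) (n : ℕ) : qPoch a x (n + 1) = qPoch a x n * (1 - a * x ^ n) :=
  Finset.prod_range_succ _ n

lemma qPoch_add (a x : ℂ) (m n : ℕ) :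
    qPoch a x (m + n) = qPoch a x m * qPoch (a * x ^ m) x n := by
  simp only [qPoch, Finset.prod_range_add, pow_add, mul_assoc]

lemma qPoch_ne_zero {a x : ℂ} (ha : ‖a‖ < 1) (hx : ‖x‖ < 1) (n : ℕ) : qPoch a x n ≠ 0 :=
  Finset.prod_ne_zero_iff.2 fun i _ => sub_ne_zero.2 (mul_pow_ne_one ha hx i).symm

lemma qPochInf_ne_zero {a x : ℂ} (ha : ‖a‖ < 1) (hx : ‖x‖ < 1) : qPochInf a x ≠ 0 := by
  simp only [qPochInf, sub_eq_add_neg]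
  refine tprod_one_add_ne_zero_of_summable (fun n => ?_) (summable_norm_neg_mul_pow a hx)
  rw [← sub_eq_add_neg]
  exact sub_ne_zero.2 (mul_pow_ne_one ha hx n).symm

lemma qPoch_mul_qPochInf (a : ℂ) {x : ℂ} (hx : ‖x‖ < 1) (m : ℕ) :
    qPoch a x m * qPochInf (a * x ^ m) x = qPochInf a x := by
  refine tendsto_nhds_unique ((tendsto_qPoch (a * x ^ m) hx).const_mul (qPoch a x m)) ?_
  simpa only [Function.comp_def, ← qPoch_add, add_comm m] using
    (tendsto_qPoch a hx).comp (tendsto_add_atTop_nat m)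

lemma qPochInf_mul_qPochInf_neg (a : ℂ) {x : ℂ} (hx : ‖x‖ < 1) :
    qPochInf a x * qPochInf (-a) x = qPochInf (a ^ 2) (x ^ 2) := by
  rw [qPochInf, qPochInf, ← (multipliable_one_sub_mul_pow a hx).tprod_mul
    (multipliable_one_sub_mul_pow (-a) hx), qPochInf]
  exact tprod_congr fun n => by ring

lemma qPoch_mul_eq_prod (a x : ℂ) (k n : ℕ) :
    qPoch a x (k * n) = ∏ i ∈ Finset.range k, qPoch (a * x ^ i) (x ^ k) n := by
  induction n with
  | zero => simp [qPoch_zero]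
  | succ n ih =>
    simp only [Nat.mul_succ, qPoch_add, ih, qPoch_succ, Finset.prod_mul_distrib]
    congr 1
    exact Finset.prod_congr rfl fun i _ => by ring

lemma qPochInf_eq_prod (a : ℂ) {x : ℂ} (hx : ‖x‖ < 1) {k : ℕ} (hk : k ≠ 0) :
    qPochInf a x = ∏ i ∈ Finset.range k, qPochInf (a * x ^ i) (x ^ k) := by
  refine tendsto_nhds_unique
    ((tendsto_qPoch a hx).comp (tendsto_id.const_mul_atTop' (Nat.pos_of_ne_zero hk))) ?_
  simp only [Function.comp_def, id, qPoch_mul_eq_prod]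
  exact tendsto_finsetProd _ fun i _ => tendsto_qPoch _ (norm_pow_lt_one hx hk)

lemma add_one_mul_add_two_div_two (m : ℕ) :
    (m + 1) * (m + 1 + 1) / 2 = m * (m + 1) / 2 + (m + 1) := by
  rw [show (m + 1) * (m + 1 + 1) = m * (m + 1) + (m + 1) * 2 by ring,
    Nat.add_mul_div_right _ _ two_pos]

lemma qPochInf_div_pow_mul {x z : ℂ} (hx0 : x ≠ 0) (hx : ‖x‖ < 1) (hz : z ≠ 0) (m : ℕ) :
    qPochInf (z / x ^ m) x * x ^ (m * (m + 1) / 2)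
      = (-z) ^ m * qPoch (x / z) x m * qPochInf z x := by
  induction m with
  | zero => simp [qPoch_zero]
  | succ m ih =>
    have hfirst : qPochInf (z / x ^ (m + 1)) x
        = (1 - z / x ^ (m + 1)) * qPochInf (z / x ^ m) x := by
      rw [← qPoch_mul_qPochInf _ hx 1, qPoch_succ, qPoch_zero, pow_one,
        show z / x ^ (m + 1) * x = z / x ^ m by rw [pow_succ]; field_simp]
      ring
    calc
      _ = (1 - z / x ^ (m + 1)) * x ^ (m + 1)
          * (qPochInf (z / x ^ m) x * x ^ (m * (m + 1) / 2)) := by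
        rw [hfirst, add_one_mul_add_two_div_two]
        ring
      _ = _ := by
        rw [ih, qPoch_succ]
        field_simp
        ring

end Pochhammer

section Reciprocal

/-- The reciprocal `1 / (x; x)_m`, extended by `0` to negative `m`. With this convention the
sums over `ℤ` below terminate on their own and `invQPoch_sub_one` holds for every integer. -/
noncomputable def invQPoch (x : ℂ) (m : ℤ) : ℂ := if m < 0 then 0 else (qPoch x x m.toNat)⁻¹

lemma invQPoch_of_neg (x : ℂ) {m : ℤ} (hm : m < 0) : invQPoch x m = 0 := if_pos hm

lemma invQPoch_natCast (x : ℂ) (n : ℕ) : invQPoch x n = (qPoch x x n)⁻¹ := by simp [invQPoch]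

lemma invQPoch_zero (x : ℂ) : invQPoch x 0 = 1 := by simp [invQPoch, qPoch_zero]

variable {x : ℂ}

lemma invQPoch_sub_one (hx : ‖x‖ < 1) (m : ℤ) :
    invQPoch x (m - 1) = (1 - x ^ m) * invQPoch x m := by
  rcases lt_trichotomy m 0 with hm | rfl | hm
  · rw [invQPoch_of_neg x hm, invQPoch_of_neg x (by lia), mul_zero]
  · rw [invQPoch_of_neg x (by lia), zpow_zero, sub_self, zero_mul]
  · obtain ⟨n, rfl⟩ : ∃ n : ℕ, m = (n + 1 : ℕ) := ⟨(m - 1).toNat, by lia⟩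
    have hn := sub_ne_zero.2 (mul_pow_ne_one hx hx n).symm
    rw [Nat.cast_succ, add_sub_cancel_right, ← Nat.cast_succ, invQPoch_natCast, invQPoch_natCast,
      Nat.succ_eq_add_one, qPoch_succ, zpow_natCast, pow_succ', mul_inv, mul_left_comm,
      mul_inv_cancel₀ hn, mul_one]

lemma tendsto_invQPoch (hx : ‖x‖ < 1) :
    Tendsto (invQPoch x) atTop (𝓝 (qPochInf x x)⁻¹) := by
  have htoNat : Tendsto Int.toNat atTop atTop :=
    tendsto_atTop_atTop.2 fun b => ⟨b, fun a ha => by lia⟩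
  refine (((tendsto_qPoch x hx).inv₀ (qPochInf_ne_zero hx hx)).comp htoNat).congr' ?_
  filter_upwards [eventually_ge_atTop 0] with m hm
  exact (if_neg hm.not_gt).symm

lemma exists_norm_invQPoch_le (hx : ‖x‖ < 1) : ∃ C : ℝ, ∀ m, ‖invQPoch x m‖ ≤ C := by
  obtain ⟨C, hC⟩ := ((tendsto_qPoch x hx).inv₀ (qPochInf_ne_zero hx hx)).norm.bddAbove_range
  have hC' (n : ℕ) : ‖invQPoch x n‖ ≤ C := invQPoch_natCast x n ▸ hC ⟨n, rfl⟩
  refine ⟨C, fun m => ?_⟩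
  rcases lt_or_ge m 0 with hm | hm
  · rw [invQPoch_of_neg x hm, norm_zero]
    exact (norm_nonneg _).trans (hC' 0)
  · lift m to ℕ using hm
    exact hC' m

lemma summable_mul_invQPoch (x : ℂ) (f : ℤ → ℂ) {k : ℤ} (hk : k ≠ 0) (a b : ℤ) :
    Summable fun j => f j * (invQPoch x (a - k * j) * invQPoch x (b + k * j)) := by
  refine summable_of_hasFiniteSupport
    (((Set.finite_Icc (-b) a).preimage (mul_right_injective₀ hk).injOn).subset fun j hj => ?_)
  contrapose! hj
  rw [Set.mem_preimage, Set.mem_Icc, not_and_or] at hj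
  rw [Function.notMem_support]
  rcases hj with hj | hj
  · rw [invQPoch_of_neg x (show b + k * j < 0 by lia), mul_zero, mul_zero]
  · rw [invQPoch_of_neg x (show a - k * j < 0 by lia), zero_mul, mul_zero]

end Reciprocal

section Theta

/-- The general term `z ^ j * y ^ (j * (j - 1) / 2)` of the bilateral theta series. -/
noncomputable def thetaTerm (z y : ℂ) (j : ℤ) : ℂ := z ^ j * y ^ (j * (j - 1) / 2)

lemma two_mul_mul_sub_one_ediv_two (j : ℤ) : 2 * (j * (j - 1) / 2) = j * (j - 1) :=
  Int.mul_ediv_cancel' (Int.even_mul_pred_self j).two_dvd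

lemma thetaTerm_zero (z y : ℂ) : thetaTerm z y 0 = 1 := by simp [thetaTerm]

lemma thetaTerm_ne_zero {z y : ℂ} (hz : z ≠ 0) (hy : y ≠ 0) (j : ℤ) : thetaTerm z y j ≠ 0 :=
  mul_ne_zero (zpow_ne_zero _ hz) (zpow_ne_zero _ hy)

lemma thetaTerm_add_one {z y : ℂ} (hz : z ≠ 0) (hy : y ≠ 0) (j : ℤ) :
    thetaTerm z y (j + 1) = z * y ^ j * thetaTerm z y j := by
  have hexp : (j + 1) * (j + 1 - 1) / 2 = j + j * (j - 1) / 2 := by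
    linarith [two_mul_mul_sub_one_ediv_two j, two_mul_mul_sub_one_ediv_two (j + 1)]
  rw [thetaTerm, thetaTerm, hexp, zpow_add₀ hy, zpow_add_one₀ hz]
  ring

lemma thetaTerm_neg (z : ℂ) {y : ℂ} (hy : y ≠ 0) (j : ℤ) :
    thetaTerm z y (-j) = thetaTerm (y / z) y j := by
  have hexp : -j * (-j - 1) / 2 = j + j * (j - 1) / 2 := by
    linarith [two_mul_mul_sub_one_ediv_two j, two_mul_mul_sub_one_ediv_two (-j)]
  rw [thetaTerm, thetaTerm, hexp, zpow_add₀ hy, div_zpow, zpow_neg]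
  ring

lemma thetaTerm_mul_zpow (z y w : ℂ) (j : ℤ) :
    thetaTerm z y j * w ^ j = thetaTerm (z * w) y j := by
  rw [thetaTerm, thetaTerm, mul_zpow]
  ring

lemma thetaTerm_mul_zpow_sq (z y : ℂ) {w : ℂ} (hw : w ≠ 0) (j : ℤ) :
    thetaTerm z y j * w ^ (j ^ 2) = thetaTerm (z * w) (y * w ^ 2) j := by
  have hexp : j ^ 2 = j + 2 * (j * (j - 1) / 2) := by
    linarith [two_mul_mul_sub_one_ediv_two j]
  rw [thetaTerm, thetaTerm, hexp, zpow_add₀ hw, mul_zpow, mul_zpow, zpow_mul, zpow_ofNat]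
  ring

variable {z y : ℂ}

lemma summable_norm_thetaTerm_natCast (hz : z ≠ 0) (hy0 : y ≠ 0) (hy : ‖y‖ < 1) :
    Summable fun n : ℕ => ‖thetaTerm z y n‖ := by
  refine summable_of_ratio_test_tendsto_lt_one zero_lt_one
    (.of_forall fun n => norm_ne_zero_iff.2 (thetaTerm_ne_zero hz hy0 n)) ?_
  have hratio (n : ℕ) :
      ‖‖thetaTerm z y (n + 1 : ℕ)‖‖ / ‖‖thetaTerm z y n‖‖ = ‖z‖ * ‖y‖ ^ n := by
    rw [norm_norm, norm_norm, Nat.cast_succ, thetaTerm_add_one hz hy0, norm_mul, norm_mul,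
      zpow_natCast, norm_pow,
      mul_div_cancel_right₀ _ (norm_ne_zero_iff.2 (thetaTerm_ne_zero hz hy0 n))]
  simp only [hratio]
  simpa only [mul_zero] using
    (tendsto_pow_atTop_nhds_zero_of_lt_one (norm_nonneg y) hy).const_mul ‖z‖

lemma summable_norm_thetaTerm (hz : z ≠ 0) (hy0 : y ≠ 0) (hy : ‖y‖ < 1) :
    Summable fun j : ℤ => ‖thetaTerm z y j‖ := by
  refine .of_nat_of_neg (summable_norm_thetaTerm_natCast hz hy0 hy) ?_
  simp only [thetaTerm_neg z hy0]
  exact summable_norm_thetaTerm_natCast (div_ne_zero hy0 hz) hy0 hy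

end Theta

section ThetaSum

/-- The bilateral sum of `z ^ j * y ^ (j * (j - 1) / 2) / ((x; x)_{a - k j} (x; x)_{b + k j})`,
which terminates for `k ≠ 0`. It is a truncation, with indices `a` and `b`, of the theta series,
and the finite identities of this file are closed forms of it. -/
noncomputable def thetaSum (y x : ℂ) (k : ℤ) (z : ℂ) (a b : ℤ) : ℂ :=
  ∑' j : ℤ, thetaTerm z y j * (invQPoch x (a - k * j) * invQPoch x (b + k * j))

lemma thetaSum_eq_of_lt (y x z : ℂ) {k a b : ℤ} (ha : a < k) (hb : b < k) :
    thetaSum y x k z a b = invQPoch x a * invQPoch x b := by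
  rw [thetaSum, tsum_eq_single 0 fun j hj => ?_]
  · simp [thetaTerm_zero]
  · rcases lt_or_gt_of_ne hj with hj | hj
    · rcases lt_or_ge (b + k * j) 0 with h | h
      · rw [invQPoch_of_neg x h, mul_zero, mul_zero]
      · rw [invQPoch_of_neg x (show a - k * j < 0 by nlinarith), zero_mul, mul_zero]
    · rcases lt_or_ge (a - k * j) 0 with h | h
      · rw [invQPoch_of_neg x h, zero_mul, mul_zero]
      · rw [invQPoch_of_neg x (show b + k * j < 0 by nlinarith), mul_zero, mul_zero]

variable {x y z : ℂ} {k : ℤ}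

lemma thetaSum_reflect (hy : y ≠ 0) (x z : ℂ) (k a b : ℤ) :
    thetaSum y x k z a b = thetaSum y x k (y / z) b a := by
  rw [thetaSum, ← (Equiv.neg ℤ).tsum_eq, thetaSum]
  refine tsum_congr fun j => ?_
  rw [Equiv.neg_apply, thetaTerm_neg z hy, mul_neg, sub_neg_eq_add, ← sub_eq_add_neg,
    mul_comm (invQPoch _ _)]

lemma thetaSum_shift (hy : y ≠ 0) (hz : z ≠ 0) (x : ℂ) (k a b : ℤ) :
    thetaSum y x k z a b = z * thetaSum y x k (z * y) (a - k) (b + k) := by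
  rw [thetaSum, ← (Equiv.addRight (1 : ℤ)).tsum_eq, thetaSum, ← tsum_mul_left]
  refine tsum_congr fun j => ?_
  rw [Equiv.coe_addRight, thetaTerm_add_one hz hy, ← thetaTerm_mul_zpow,
    show a - k * (j + 1) = a - k - k * j by ring, show b + k * (j + 1) = b + k + k * j by ring]
  ring

lemma thetaSum_inv (hy : y ≠ 0) (hz : z ≠ 0) (x : ℂ) (k a b : ℤ) :
    thetaSum y x k z a b = z * thetaSum y x k z⁻¹ (b + k) (a - k) := by
  rw [thetaSum_shift hy hz, thetaSum_reflect hy, div_mul_cancel_right₀ hy]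

lemma thetaSum_neg_one (hy : y ≠ 0) (x : ℂ) (k a b : ℤ) :
    thetaSum y x k (-1) a b = -thetaSum y x k (-1) (b + k) (a - k) := by
  rw [thetaSum_inv hy (neg_ne_zero.2 one_ne_zero), inv_neg_one, neg_one_mul]

lemma thetaSum_neg_one_eq_zero (hy : y ≠ 0) (x : ℂ) (k b : ℤ) :
    thetaSum y x k (-1) (b + k) b = 0 := by
  have h := thetaSum_neg_one hy x k (b + k) b
  rw [add_sub_cancel_right] at h
  exact CharZero.eq_neg_self_iff.1 h

lemma thetaSum_sub_one_left (hx0 : x ≠ 0) (hx : ‖x‖ < 1) (hk : k ≠ 0) (y z : ℂ) (a b : ℤ) :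
    thetaSum y x k z (a - 1) b
      = thetaSum y x k z a b - x ^ a * thetaSum y x k (z / x ^ k) a b := by
  simp only [thetaSum]
  rw [← tsum_mul_left, ← (summable_mul_invQPoch x _ hk a b).tsum_sub
    ((summable_mul_invQPoch x _ hk a b).mul_left _)]
  refine tsum_congr fun j => ?_
  rw [sub_right_comm, invQPoch_sub_one hx, div_eq_mul_inv, ← thetaTerm_mul_zpow, inv_zpow,
    ← zpow_mul, zpow_sub₀ hx0]
  ring

lemma thetaSum_sub_one_right (hx0 : x ≠ 0) (hx : ‖x‖ < 1) (hk : k ≠ 0) (hy : y ≠ 0) (z : ℂ)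
    (a b : ℤ) :
    thetaSum y x k z a (b - 1)
      = thetaSum y x k z a b - x ^ b * thetaSum y x k (z * x ^ k) a b := by
  rw [thetaSum_reflect hy, thetaSum_sub_one_left hx0 hx hk, thetaSum_reflect hy x z,
    thetaSum_reflect hy x (z * x ^ k), div_div]

end ThetaSum

section TripleProduct

variable {x z : ℂ}

lemma one_sub_zpow_mul_thetaSum (hx0 : x ≠ 0) (hx : ‖x‖ < 1) (hz : z ≠ 0) (a b : ℤ) :
    (1 - x ^ (a + b)) * thetaSum x x 1 z a b
      = (1 + z * x ^ (a - 1)) * thetaSum x x 1 z (a - 1) b := by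
  have hleft : thetaSum x x 1 z (a - 1) b = thetaSum x x 1 z a b
      - z * x ^ (a - 1) * thetaSum x x 1 z (a - 1) (b + 1) := by
    rw [thetaSum_sub_one_left hx0 hx one_ne_zero, zpow_one,
      thetaSum_shift hx0 (div_ne_zero hz hx0), div_mul_cancel₀ _ hx0, zpow_sub_one₀ hx0]
    ring
  have hright : z * thetaSum x x 1 z (a - 1) b = z * thetaSum x x 1 z (a - 1) (b + 1)
      - x ^ (b + 1) * thetaSum x x 1 z a b := by
    have h := thetaSum_sub_one_right hx0 hx one_ne_zero hx0 z (a - 1) (b + 1)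
    rw [add_sub_cancel_right, zpow_one] at h
    rw [h, thetaSum_shift hx0 hz x 1 a b]
    ring
  have hpow : x ^ (a + b) = x ^ (a - 1) * x ^ (b + 1) := by
    rw [← zpow_add₀ hx0]
    congr 1
    ring
  rw [hpow]
  linear_combination -hleft - x ^ (a - 1) * hright

lemma thetaSum_natCast_mul (hx0 : x ≠ 0) (hx : ‖x‖ < 1) (hz : z ≠ 0) (m n : ℕ) :
    thetaSum x x 1 (-z) m n * qPoch x x (m + n)
      = qPoch z x m * (thetaSum x x 1 (-z) 0 n * qPoch x x n) := by
  induction m with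
  | zero => rw [Nat.cast_zero, zero_add, qPoch_zero, one_mul]
  | succ m ih =>
    have hstep := one_sub_zpow_mul_thetaSum hx0 hx (neg_ne_zero.2 hz) (m + 1 : ℕ) n
    rw [Nat.cast_succ, add_sub_cancel_right, zpow_natCast, ← Nat.cast_succ, ← Nat.cast_add,
      zpow_natCast] at hstep
    rw [Nat.succ_eq_add_one, add_right_comm] at hstep
    rw [add_right_comm, qPoch_succ, qPoch_succ, ← pow_succ']
    linear_combination qPoch x x (m + n) * hstep + (1 - z * x ^ m) * ih

/-- Cauchy's `q`-binomial theorem. -/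
lemma thetaSum_natCast_zero (hx0 : x ≠ 0) (hx : ‖x‖ < 1) (hz : z ≠ 0) (m : ℕ) :
    thetaSum x x 1 (-z) m 0 = qPoch z x m / qPoch x x m := by
  have h := thetaSum_natCast_mul hx0 hx hz m 0
  rw [Nat.cast_zero, thetaSum_eq_of_lt _ _ _ one_pos one_pos, invQPoch_zero, qPoch_zero, mul_one,
    mul_one, mul_one] at h
  exact eq_div_of_mul_eq (qPoch_ne_zero hx hx m) h

/-- The finite form of the Jacobi triple product. -/
lemma thetaSum_natCast_natCast (hx0 : x ≠ 0) (hx : ‖x‖ < 1) (hz : z ≠ 0) (m n : ℕ) :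
    thetaSum x x 1 (-z) m n = qPoch z x m * qPoch (x / z) x n / qPoch x x (m + n) := by
  have hbase : thetaSum x x 1 (-z) 0 n * qPoch x x n = qPoch (x / z) x n := by
    rw [thetaSum_reflect hx0, div_neg, thetaSum_natCast_zero hx0 hx (div_ne_zero hx0 hz),
      div_mul_cancel₀ _ (qPoch_ne_zero hx hx n)]
  rw [← hbase, ← thetaSum_natCast_mul hx0 hx hz, mul_div_cancel_right₀ _ (qPoch_ne_zero hx hx _)]

lemma tendsto_tsum_mul_of_norm_le {ι : Type*} {w : ι → ℂ} (hw : Summable fun i => ‖w i‖)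
    {f : ℕ → ι → ℂ} {g : ι → ℂ} {C : ℝ} (hC : ∀ n i, ‖f n i‖ ≤ C)
    (hf : ∀ i, Tendsto (f · i) atTop (𝓝 (g i))) :
    Tendsto (fun n => ∑' i, w i * f n i) atTop (𝓝 (∑' i, w i * g i)) := by
  refine tendsto_tsum_of_dominated_convergence (hw.mul_right C) (fun i => (hf i).const_mul _)
    (.of_forall fun n i => ?_)
  rw [norm_mul]
  exact mul_le_mul_of_nonneg_left (hC n i) (norm_nonneg _)

lemma tendsto_invQPoch_natCast_add (hx : ‖x‖ < 1) (c : ℤ) :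
    Tendsto (fun n : ℕ => invQPoch x (n + c)) atTop (𝓝 (qPochInf x x)⁻¹) :=
  (tendsto_invQPoch hx).comp (tendsto_atTop_add_const_right _ _ tendsto_natCast_atTop_atTop)

lemma tsum_thetaTerm_mul_invQPoch (hx0 : x ≠ 0) (hx : ‖x‖ < 1) (hz : z ≠ 0) :
    ∑' j, thetaTerm (-z) x j * invQPoch x j = qPochInf z x := by
  obtain ⟨C, hC⟩ := exists_norm_invQPoch_le hx
  have hsum : Tendsto (fun m : ℕ => thetaSum x x 1 (-z) m 0) atTop
      (𝓝 (∑' j, thetaTerm (-z) x j * ((qPochInf x x)⁻¹ * invQPoch x j))) := by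
    simp only [thetaSum, one_mul, zero_add, sub_eq_add_neg]
    exact tendsto_tsum_mul_of_norm_le (summable_norm_thetaTerm (neg_ne_zero.2 hz) hx0 hx)
      (fun m j => norm_mul_le_of_le (hC _) (hC _))
      fun j => (tendsto_invQPoch_natCast_add hx _).mul_const _
  have hprod := (tendsto_qPoch z hx).div (tendsto_qPoch x hx) (qPochInf_ne_zero hx hx)
  have h := tendsto_nhds_unique hsum
    (hprod.congr fun m => (thetaSum_natCast_zero hx0 hx hz m).symm)
  simp only [mul_left_comm _ (qPochInf x x)⁻¹, tsum_mul_left, div_eq_inv_mul] at h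
  exact mul_left_cancel₀ (inv_ne_zero (qPochInf_ne_zero hx hx)) h

lemma tsum_thetaTerm (hx0 : x ≠ 0) (hx : ‖x‖ < 1) (hz : z ≠ 0) :
    ∑' j, thetaTerm (-z) x j = qPochInf z x * qPochInf (x / z) x * qPochInf x x := by
  obtain ⟨C, hC⟩ := exists_norm_invQPoch_le hx
  have hsum : Tendsto (fun n : ℕ => thetaSum x x 1 (-z) n n) atTop
      (𝓝 (∑' j, thetaTerm (-z) x j * ((qPochInf x x)⁻¹ * (qPochInf x x)⁻¹))) := by
    simp only [thetaSum, one_mul, sub_eq_add_neg]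
    exact tendsto_tsum_mul_of_norm_le (summable_norm_thetaTerm (neg_ne_zero.2 hz) hx0 hx)
      (fun n j => norm_mul_le_of_le (hC _) (hC _))
      fun j => (tendsto_invQPoch_natCast_add hx _).mul (tendsto_invQPoch_natCast_add hx _)
  have hprod := ((tendsto_qPoch z hx).mul (tendsto_qPoch (x / z) hx)).div
    ((tendsto_qPoch x hx).comp (tendsto_id.atTop_add_atTop tendsto_id)) (qPochInf_ne_zero hx hx)
  have h := tendsto_nhds_unique hsum
    (hprod.congr fun n => (thetaSum_natCast_natCast hx0 hx hz n n).symm)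
  rw [tsum_mul_right] at h
  have hne := qPochInf_ne_zero hx hx
  field_simp at h
  linear_combination h

lemma tsum_thetaTerm_eq_Jam {q : ℂ} (hq0 : q ≠ 0) (hq : ‖q‖ < 1) {a m : ℕ} (ham : a ≤ m)
    (hm : m ≠ 0) : ∑' j, thetaTerm (-q ^ a) (q ^ m) j = Jam q a m := by
  rw [tsum_thetaTerm (pow_ne_zero m hq0) (norm_pow_lt_one hq hm) (pow_ne_zero a hq0), Jam,
    pow_sub₀ q hq0 ham, div_eq_mul_inv]

end TripleProduct

section BaileyLemma

variable {x : ℂ}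

lemma zpow_sq_add_mul_eq_thetaTerm (hx0 : x ≠ 0) (s j : ℤ) :
    x ^ (j ^ 2 + s * j) = thetaTerm (x ^ (s + 1)) (x ^ 2) j := by
  have h := thetaTerm_mul_zpow_sq (x ^ s) 1 hx0 j
  rw [one_mul, thetaTerm, one_zpow, mul_one, ← zpow_mul] at h
  rw [zpow_add_one₀ hx0, ← h, zpow_add₀ hx0, mul_comm]

lemma summable_norm_zpow_sq_add_mul (hx0 : x ≠ 0) (hx : ‖x‖ < 1) (s : ℤ) :
    Summable fun j : ℤ => ‖x ^ (j ^ 2 + s * j)‖ := by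
  simp only [zpow_sq_add_mul_eq_thetaTerm hx0]
  exact summable_norm_thetaTerm (zpow_ne_zero _ hx0) (pow_ne_zero _ hx0)
    (norm_pow_lt_one hx two_ne_zero)

lemma one_sub_zpow_mul_invQPoch_mul (hx0 : x ≠ 0) (hx : ‖x‖ < 1) (a b : ℤ) :
    (1 - x ^ (a + b)) * (invQPoch x a * invQPoch x b)
      = invQPoch x a * invQPoch x (b - 1) + x ^ b * (invQPoch x (a - 1) * invQPoch x b) := by
  rw [invQPoch_sub_one hx a, invQPoch_sub_one hx b, zpow_add₀ hx0]
  ring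

/-- The `q`-Vandermonde sum of `x ^ (m ^ 2 + s m) / ((x; x)_{m + s} (x; x)_{N - m} (x; x)_m)`.
Summing over all integers `m` makes the shift `m ↦ m + 1` available in its recurrence; its limit
`N → ∞` gives the conjugate Bailey pair. -/
noncomputable def vandermondeSum (x : ℂ) (N s : ℤ) : ℂ :=
  ∑' m : ℤ, x ^ (m ^ 2 + s * m) * invQPoch x (m + s) * (invQPoch x (N - m) * invQPoch x m)

lemma one_sub_zpow_mul_vandermondeSum (hx0 : x ≠ 0) (hx : ‖x‖ < 1) (N s : ℤ) :
    (1 - x ^ N) * vandermondeSum x N s = vandermondeSum x (N - 1) (s + 1) := by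
  set f : ℤ → ℂ := fun m => x ^ (m ^ 2 + s * m) * invQPoch x (m + s) with hf
  have hsum (g : ℤ → ℂ) (a b : ℤ) :
      Summable fun m => g m * (invQPoch x (a - m) * invQPoch x (b + m)) := by
    simpa only [one_mul] using summable_mul_invQPoch x g one_ne_zero a b
  have hsplit (m : ℤ) : (1 - x ^ N) * (f m * (invQPoch x (N - m) * invQPoch x m))
      = f m * (invQPoch x (N - m) * invQPoch x (-1 + m))
        + f m * x ^ m * (invQPoch x (N - 1 - m) * invQPoch x (0 + m)) := by
    have h := one_sub_zpow_mul_invQPoch_mul hx0 hx (N - m) m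
    rw [sub_add_cancel, sub_right_comm] at h
    rw [zero_add, neg_add_eq_sub]
    linear_combination f m * h
  have hmerge (m : ℤ) : f (m + 1) * (invQPoch x (N - (m + 1)) * invQPoch x (-1 + (m + 1)))
        + f m * x ^ m * (invQPoch x (N - 1 - m) * invQPoch x (0 + m))
      = x ^ (m ^ 2 + (s + 1) * m) * invQPoch x (m + (s + 1))
        * (invQPoch x (N - 1 - m) * invQPoch x m) := by
    have hinv := invQPoch_sub_one hx (m + (s + 1))
    rw [show m + (s + 1) - 1 = m + s by ring] at hinv
    simp only [hf]
    rw [hinv, show m + 1 + s = m + (s + 1) by ring, show N - (m + 1) = N - 1 - m by ring,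
      neg_add_eq_sub, add_sub_cancel_right, zero_add,
      show (m + 1) ^ 2 + s * (m + 1) = m ^ 2 + s * m + m + (m + (s + 1)) by ring,
      show m ^ 2 + (s + 1) * m = m ^ 2 + s * m + m by ring,
      zpow_add₀ hx0 (m ^ 2 + s * m + m), zpow_add₀ hx0 (m ^ 2 + s * m) m]
    ring
  have hshift := (Equiv.addRight (1 : ℤ)).tsum_eq fun m =>
    f m * (invQPoch x (N - m) * invQPoch x (-1 + m))
  have hsum_shift := (Equiv.addRight (1 : ℤ)).summable_iff.2 (hsum f N (-1))
  rw [vandermondeSum, ← tsum_mul_left, tsum_congr hsplit, (hsum _ _ _).tsum_add (hsum _ _ _),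
    ← hshift]
  exact (hsum_shift.tsum_add (hsum _ _ _)).symm.trans (tsum_congr hmerge)

lemma vandermondeSum_natCast (hx0 : x ≠ 0) (hx : ‖x‖ < 1) (N : ℕ) (s : ℤ) :
    vandermondeSum x N s = invQPoch x N * invQPoch x (N + s) := by
  induction N generalizing s with
  | zero =>
    rw [vandermondeSum, tsum_eq_single 0 fun m hm => ?_]
    · simp [invQPoch_zero]
    · rcases lt_or_gt_of_ne hm with hm | hm
      · rw [invQPoch_of_neg x hm, mul_zero, mul_zero]
      · rw [invQPoch_of_neg x (show ((0 : ℕ) : ℤ) - m < 0 by lia), zero_mul, mul_zero]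
  | succ N ih =>
    have hne : (1 : ℂ) - x ^ ((N + 1 : ℕ) : ℤ) ≠ 0 := by
      rw [zpow_natCast, pow_succ']
      exact sub_ne_zero.2 (mul_pow_ne_one hx hx N).symm
    refine mul_left_cancel₀ hne ?_
    rw [one_sub_zpow_mul_vandermondeSum hx0 hx, ← mul_assoc, ← invQPoch_sub_one hx,
      Nat.cast_succ, add_sub_cancel_right, ih, add_right_comm, add_assoc]

lemma tsum_zpow_mul_invQPoch (hx0 : x ≠ 0) (hx : ‖x‖ < 1) (s : ℤ) :
    ∑' m : ℤ, x ^ (m ^ 2 + s * m) * (invQPoch x (m + s) * invQPoch x m)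
      = (qPochInf x x)⁻¹ := by
  obtain ⟨C, hC⟩ := exists_norm_invQPoch_le hx
  have hsum : Tendsto (fun N : ℕ => ∑' m : ℤ, x ^ (m ^ 2 + s * m)
        * (invQPoch x (N + -m) * (invQPoch x (m + s) * invQPoch x m))) atTop
      (𝓝 (∑' m : ℤ, x ^ (m ^ 2 + s * m)
        * ((qPochInf x x)⁻¹ * (invQPoch x (m + s) * invQPoch x m)))) :=
    tendsto_tsum_mul_of_norm_le (summable_norm_zpow_sq_add_mul hx0 hx s)
      (fun N m => norm_mul_le_of_le (hC _) (norm_mul_le_of_le (hC _) (hC _)))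
      fun m => (tendsto_invQPoch_natCast_add hx _).mul_const _
  have hprod : Tendsto (fun N : ℕ => invQPoch x N * invQPoch x (N + s)) atTop
      (𝓝 ((qPochInf x x)⁻¹ * (qPochInf x x)⁻¹)) := by
    simpa only [add_zero] using
      (tendsto_invQPoch_natCast_add hx 0).mul (tendsto_invQPoch_natCast_add hx s)
  have h := tendsto_nhds_unique hsum (hprod.congr fun N => by
    rw [← vandermondeSum_natCast hx0 hx]
    exact tsum_congr fun m => by rw [sub_eq_add_neg]; ring)
  simp only [mul_left_comm _ (qPochInf x x)⁻¹, tsum_mul_left] at h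
  exact mul_left_cancel₀ (inv_ne_zero (qPochInf_ne_zero hx hx)) h

/-- The conjugate Bailey pair of Bailey's lemma in its limiting case. -/
lemma tsum_zpow_mul_invQPoch_add_sub (hx0 : x ≠ 0) (hx : ‖x‖ < 1) (s r : ℤ) :
    ∑' n : ℤ, x ^ (n ^ 2 + s * n) * (invQPoch x (n + s - r) * invQPoch x (n + r))
      = x ^ (r ^ 2 - s * r) * (qPochInf x x)⁻¹ := by
  rw [← (Equiv.subRight r).tsum_eq, ← tsum_zpow_mul_invQPoch hx0 hx (s - 2 * r), ← tsum_mul_left]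
  refine tsum_congr fun m => ?_
  rw [Equiv.subRight_apply, ← mul_assoc (x ^ _) (x ^ _), ← zpow_add₀ hx0, sub_add_cancel,
    show m - r + s - r = m + (s - 2 * r) by ring,
    show (m - r) ^ 2 + s * (m - r) = r ^ 2 - s * r + (m ^ 2 + (s - 2 * r) * m) by ring]

lemma summable_pow_natAbs {ρ : ℝ} (h0 : 0 ≤ ρ) (h1 : ρ < 1) :
    Summable fun n : ℤ => ρ ^ n.natAbs :=
  .of_nat_of_neg (by simpa using summable_geometric_of_lt_one h0 h1)
    (by simpa using summable_geometric_of_lt_one h0 h1)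

lemma norm_zpow_mul_invQPoch_le {C : ℝ} (hx0 : x ≠ 0) (hx : ‖x‖ < 1)
    (hC : ∀ m, ‖invQPoch x m‖ ≤ C) (a b : ℤ) :
    ‖x ^ (a * b) * (invQPoch x a * invQPoch x b)‖
      ≤ (‖x‖ ^ a.natAbs + ‖x‖ ^ b.natAbs) * (C * C) := by
  have hC0 : 0 ≤ C := (norm_nonneg _).trans (hC 0)
  rcases lt_or_ge a 0 with ha | ha
  · rw [invQPoch_of_neg x ha, zero_mul, mul_zero, norm_zero]
    positivity
  rcases lt_or_ge b 0 with hb | hb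
  · rw [invQPoch_of_neg x hb, mul_zero, mul_zero, norm_zero]
    positivity
  lift a to ℕ using ha
  lift b to ℕ using hb
  refine norm_mul_le_of_le ?_ (norm_mul_le_of_le (hC _) (hC _))
  rw [← Nat.cast_mul, zpow_natCast, norm_pow, Int.natAbs_natCast, Int.natAbs_natCast]
  rcases b.eq_zero_or_pos with rfl | hb
  · rw [mul_zero]
    exact le_add_of_nonneg_left (by positivity)
  · exact (pow_le_pow_of_le_one (norm_nonneg _) hx.le (Nat.le_mul_of_pos_right a hb)).trans
      (le_add_of_nonneg_right (by positivity))

variable {ι : Type*} {α : ι → ℂ} {φ : ι → ℤ} {s : ℤ}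

lemma summable_bailey (hx0 : x ≠ 0) (hx : ‖x‖ < 1)
    (hα : Summable fun i => ‖α i * x ^ (φ i ^ 2 - s * φ i)‖) :
    Summable fun p : ι × ℤ => x ^ (p.2 ^ 2 + s * p.2)
      * (α p.1 * (invQPoch x (p.2 + s - φ p.1) * invQPoch x (p.2 + φ p.1))) := by
  obtain ⟨C, hC⟩ := exists_norm_invQPoch_le hx
  obtain ⟨K, hK₀⟩ := summable_pow_natAbs (norm_nonneg x) hx
  have hK (c : ℤ) : HasSum (fun n : ℤ => ‖x‖ ^ (n + c).natAbs) K := by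
    simpa only [Function.comp_def, Equiv.coe_addRight] using (Equiv.addRight c).hasSum_iff.2 hK₀
  have hbound (i : ι) : HasSum (fun n : ℤ => ‖α i * x ^ (φ i ^ 2 - s * φ i)‖
      * ((‖x‖ ^ (n + (s - φ i)).natAbs + ‖x‖ ^ (n + φ i).natAbs) * (C * C)))
      (‖α i * x ^ (φ i ^ 2 - s * φ i)‖ * ((K + K) * (C * C))) :=
    (((hK _).add (hK _)).mul_right _).mul_left _
  have hsum : Summable fun p : ι × ℤ => ‖α p.1 * x ^ (φ p.1 ^ 2 - s * φ p.1)‖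
      * ((‖x‖ ^ (p.2 + (s - φ p.1)).natAbs + ‖x‖ ^ (p.2 + φ p.1).natAbs) * (C * C)) := by
    refine (summable_prod_of_nonneg fun p => ?_).2 ⟨fun i => (hbound i).summable, ?_⟩
    · have := mul_self_nonneg C
      positivity
    · simp only [(hbound _).tsum_eq]
      exact hα.mul_right _
  refine hsum.of_norm_bounded fun p => ?_
  have hexp : p.2 ^ 2 + s * p.2
      = φ p.1 ^ 2 - s * φ p.1 + (p.2 + (s - φ p.1)) * (p.2 + φ p.1) := by ring
  have hfactor : x ^ (p.2 ^ 2 + s * p.2)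
        * (α p.1 * (invQPoch x (p.2 + s - φ p.1) * invQPoch x (p.2 + φ p.1)))
      = α p.1 * x ^ (φ p.1 ^ 2 - s * φ p.1) * (x ^ ((p.2 + (s - φ p.1)) * (p.2 + φ p.1))
        * (invQPoch x (p.2 + (s - φ p.1)) * invQPoch x (p.2 + φ p.1))) := by
    rw [hexp, zpow_add₀ hx0, add_sub_assoc]
    ring
  rw [hfactor, norm_mul]
  exact mul_le_mul_of_nonneg_left (norm_zpow_mul_invQPoch_le hx0 hx hC _ _) (norm_nonneg _)

/-- The limiting case of Bailey's lemma for a family `α` spread over positions `φ`. -/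
lemma hasSum_bailey (hx0 : x ≠ 0) (hx : ‖x‖ < 1)
    (hα : Summable fun i => ‖α i * x ^ (φ i ^ 2 - s * φ i)‖) :
    HasSum (fun n : ℤ => x ^ (n ^ 2 + s * n)
        * ∑' i, α i * (invQPoch x (n + s - φ i) * invQPoch x (n + φ i)))
      ((∑' i, α i * x ^ (φ i ^ 2 - s * φ i)) / qPochInf x x) := by
  have hsum := summable_bailey hx0 hx hα
  have h := hsum.prod_symm.hasSum.prod_fiberwise fun n => (hsum.prod_symm.prod_factor n).hasSum
  have hvalue := (Equiv.prodComm ℤ ι).tsum_eq fun p : ι × ℤ => x ^ (p.2 ^ 2 + s * p.2)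
    * (α p.1 * (invQPoch x (p.2 + s - φ p.1) * invQPoch x (p.2 + φ p.1)))
  simp only [Equiv.prodComm_apply] at hvalue
  simp only [hvalue, hsum.tsum_prod, Prod.swap_prod_mk, tsum_mul_left] at h
  convert h using 1
  rw [div_eq_mul_inv, ← tsum_mul_right]
  refine tsum_congr fun i => ?_
  rw [mul_assoc, ← tsum_zpow_mul_invQPoch_add_sub hx0 hx, ← tsum_mul_left]
  exact tsum_congr fun n => mul_left_comm _ _ _

lemma thetaSum_eq_zero (y x : ℂ) (k : ℤ) (z : ℂ) {a b : ℤ} (hab : a + b < 0) :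
    thetaSum y x k z a b = 0 := by
  refine (tsum_congr fun j => ?_).trans tsum_zero
  rcases lt_or_ge (a - k * j) 0 with ha | ha
  · rw [invQPoch_of_neg x ha, zero_mul, mul_zero]
  · rw [invQPoch_of_neg x (show b + k * j < 0 by lia), mul_zero, mul_zero]

lemma hasSum_pow_mul_thetaSum {y z : ℂ} {k : ℤ} {s : ℕ} (hx0 : x ≠ 0) (hx : ‖x‖ < 1)
    (hz : z ≠ 0) (hy0 : y ≠ 0) (hy : ‖y * (x ^ k ^ 2) ^ 2‖ < 1) (hs : s ≤ 1) :
    HasSum (fun n : ℕ => x ^ (n ^ 2 + s * n) * thetaSum y x k z (n + s) n)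
      ((∑' j, thetaTerm (z * x ^ (k ^ 2 - s * k)) (y * (x ^ k ^ 2) ^ 2) j)
        / qPochInf x x) := by
  have hterm (j : ℤ) : thetaTerm z y j * x ^ ((k * j) ^ 2 - s * (k * j))
      = thetaTerm (z * x ^ (k ^ 2 - s * k)) (y * (x ^ k ^ 2) ^ 2) j := by
    rw [show z * x ^ (k ^ 2 - s * k) = z * x ^ (-(s * k)) * x ^ k ^ 2 by
        rw [mul_assoc, ← zpow_add₀ hx0, neg_add_eq_sub],
      ← thetaTerm_mul_zpow_sq _ _ (zpow_ne_zero _ hx0), ← thetaTerm_mul_zpow, ← zpow_mul,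
      ← zpow_mul, mul_assoc, ← zpow_add₀ hx0]
    congr 2
    ring
  have h := hasSum_bailey (α := thetaTerm z y) (φ := (k * ·)) (s := s) hx0 hx (by
    simp only [hterm]
    exact summable_norm_thetaTerm (mul_ne_zero hz (zpow_ne_zero _ hx0))
      (mul_ne_zero hy0 (pow_ne_zero _ (zpow_ne_zero _ hx0))) hy)
  simp only [hterm] at h
  have hzero (n : ℤ) (hn : n ∉ Set.range ((↑) : ℕ → ℤ)) :
      x ^ (n ^ 2 + s * n) * thetaSum y x k z (n + s) n = 0 := by
    have hn0 : n < 0 := by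
      by_contra! hn0
      exact hn ⟨n.toNat, Int.toNat_of_nonneg hn0⟩
    rw [thetaSum_eq_zero y x k z (show n + s + n < 0 by lia), mul_zero]
  refine ((Nat.cast_injective.hasSum_iff hzero).2 h).congr_fun fun n => ?_
  rw [Function.comp_apply, ← zpow_natCast]
  push_cast
  rfl

end BaileyLemma

section Slater

variable {q : ℂ}

lemma thetaSum_slater19_succ (hq0 : q ≠ 0) (hq : ‖q‖ < 1) (n : ℕ) :
    (1 + q ^ (2 * n + 1)) * (1 - q ^ (4 * n + 4))
        * thetaSum q (q ^ 2) 1 (-1) (n + 1 : ℕ) (n + 1 : ℕ)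
      = -q ^ (2 * n + 1) * thetaSum q (q ^ 2) 1 (-1) n n := by
  have hx0 := pow_ne_zero 2 hq0
  have hx := norm_pow_lt_one hq two_ne_zero
  have hpow : (q ^ 2) ^ ((n + 1 : ℕ) : ℤ) = q ^ (2 * n + 2) := by
    rw [zpow_natCast, ← pow_mul, mul_add_one]
  have hpred : ((n + 1 : ℕ) : ℤ) - 1 = n := by lia
  have hswap (m : ℤ) : thetaSum q (q ^ 2) 1 (-1) m m = thetaSum q (q ^ 2) 1 (-q) m m := by
    rw [thetaSum_reflect hq0, div_neg, div_one]
  have hinv : thetaSum q (q ^ 2) 1 (-q) (n + 1 : ℕ) n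
      = -q * thetaSum q (q ^ 2) 1 (-q⁻¹) (n + 1 : ℕ) n := by
    rw [thetaSum_inv hq0 (neg_ne_zero.2 hq0), hpred, inv_neg, Nat.cast_succ]
  have hleft : thetaSum q (q ^ 2) 1 (-q) n n = thetaSum q (q ^ 2) 1 (-q) (n + 1 : ℕ) n
      - q ^ (2 * n + 2) * thetaSum q (q ^ 2) 1 (-q⁻¹) (n + 1 : ℕ) n := by
    rw [← hpred, thetaSum_sub_one_left hx0 hx one_ne_zero, hpow, zpow_one, neg_div, sq q,
      div_mul_cancel_left₀ hq0]
  have hvanish : 0 = thetaSum q (q ^ 2) 1 (-1) (n + 1 : ℕ) (n + 1 : ℕ)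
      - q ^ (2 * n + 2) * thetaSum q (q ^ 2) 1 (-q ^ 2) (n + 1 : ℕ) (n + 1 : ℕ) := by
    have h := thetaSum_sub_one_right hx0 hx one_ne_zero hq0 (-1) (n + 1 : ℕ) (n + 1 : ℕ)
    rwa [hpred, Nat.cast_succ, thetaSum_neg_one_eq_zero hq0, ← Nat.cast_succ, hpow, zpow_one,
      neg_one_mul] at h
  have hright : thetaSum q (q ^ 2) 1 (-q⁻¹) (n + 1 : ℕ) n
      = thetaSum q (q ^ 2) 1 (-q ^ 2) (n + 1 : ℕ) (n + 1 : ℕ)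
        - q ^ (2 * n + 2) * thetaSum q (q ^ 2) 1 (-q) (n + 1 : ℕ) (n + 1 : ℕ) := by
    rw [← hpred, thetaSum_sub_one_right hx0 hx one_ne_zero hq0, hpow, zpow_one,
      thetaSum_reflect hq0 _ (-q⁻¹), div_neg, div_inv_eq_mul, ← sq, neg_mul, sq q,
      inv_mul_cancel_left₀ hq0]
  rw [hswap n]
  rw [hinv] at hleft
  rw [← hswap] at hright
  linear_combination q ^ (2 * n + 1) * hleft - (1 + q ^ (2 * n + 1)) * hvanish
    - q ^ (2 * n + 2) * (1 + q ^ (2 * n + 1)) * hright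

lemma thetaSum_slater19 (hq0 : q ≠ 0) (hq : ‖q‖ < 1) (n : ℕ) :
    thetaSum q (q ^ 2) 1 (-1) n n
      = (-1) ^ n * q ^ (n ^ 2) * qPoch q (q ^ 2) n / qPoch (q ^ 2) (q ^ 2) (2 * n) := by
  have hx := norm_pow_lt_one hq two_ne_zero
  refine eq_div_of_mul_eq (qPoch_ne_zero hx hx _) ?_
  induction n with
  | zero => simp [thetaSum_eq_of_lt _ _ _ one_pos one_pos, invQPoch_zero, qPoch_zero]
  | succ n ih =>
    rw [mul_add_one, ← one_add_one_eq_two, ← add_assoc, one_add_one_eq_two, qPoch_succ,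
      qPoch_succ, qPoch_succ]
    linear_combination
      (1 - q ^ (2 * n + 1)) * qPoch (q ^ 2) (q ^ 2) (2 * n) * thetaSum_slater19_succ hq0 hq n
        - q ^ (2 * n + 1) * (1 - q ^ (2 * n + 1)) * ih

lemma hasSum_slater19 (hq0 : q ≠ 0) (hq : ‖q‖ < 1) :
    HasSum (fun n : ℕ => (-1) ^ n * q ^ (3 * n ^ 2) * qPoch q (q ^ 2) n
      / qPoch (q ^ 2) (q ^ 2) (2 * n)) (Jam q 2 5 / J q 2) := by
  have hbase : q * ((q ^ 2) ^ (1 : ℤ) ^ 2) ^ 2 = q ^ 5 := by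
    rw [one_pow, zpow_one, ← pow_mul, ← pow_succ']
  have h := hasSum_pow_mul_thetaSum (z := -1) (k := 1) (s := 0) (pow_ne_zero 2 hq0)
    (norm_pow_lt_one hq two_ne_zero) (neg_ne_zero.2 one_ne_zero) hq0
    (hbase ▸ norm_pow_lt_one hq (by lia)) zero_le_one
  convert h using 2 with n
  · rw [Nat.cast_zero, add_zero, thetaSum_slater19 hq0 hq]
    ring
  · rw [← tsum_thetaTerm_eq_Jam hq0 hq (by lia) (by lia), hbase, Nat.cast_zero, zero_mul, sub_zero,
      one_pow, zpow_one, neg_one_mul]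
  · rfl

lemma thetaSum_neg_one_sub_one_right {x : ℂ} {k : ℤ} (hx0 : x ≠ 0) (hx : ‖x‖ < 1) (hk : k ≠ 0)
    (a b : ℤ) :
    thetaSum (x ^ k) x k (-1) a (b - 1)
      = thetaSum (x ^ k) x k (-1) a b - x ^ b * thetaSum (x ^ k) x k (-1) b a := by
  have hy := zpow_ne_zero k hx0
  rw [thetaSum_sub_one_right hx0 hx hk hy, thetaSum_reflect hy x (-1) k b, div_neg, div_one,
    neg_one_mul]

lemma thetaSum_slater44_succ (hq0 : q ≠ 0) (hq : ‖q‖ < 1) (n : ℕ) :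
    (1 - q ^ (n + 1)) * (1 - q ^ (2 * n + 3))
        * thetaSum (q ^ (2 : ℤ)) q 2 (-1) ((n + 1 : ℕ) + 1) (n + 1 : ℕ)
      = q ^ (n + 1) * thetaSum (q ^ (2 : ℤ)) q 2 (-1) (n + 1) n := by
  have hstep (a : ℤ) (b : ℕ) : thetaSum (q ^ (2 : ℤ)) q 2 (-1) a b
      = thetaSum (q ^ (2 : ℤ)) q 2 (-1) a (b + 1)
        - q ^ (b + 1) * thetaSum (q ^ (2 : ℤ)) q 2 (-1) (b + 1) a := by
    have h := thetaSum_neg_one_sub_one_right hq0 hq two_ne_zero a (b + 1 : ℕ)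
    rwa [zpow_natCast, Nat.cast_succ, add_sub_cancel_right] at h
  have hdiag := hstep (n + 1) n
  have hoff := hstep (n + 1) (n + 1 : ℕ)
  have hvanish := hstep (n + 2) n
  rw [thetaSum_neg_one_eq_zero (zpow_ne_zero 2 hq0)] at hvanish
  rw [Nat.cast_succ] at hoff ⊢
  rw [add_assoc (n : ℤ) 1 1, one_add_one_eq_two] at hoff ⊢
  linear_combination -q ^ (n + 1) * hdiag - q ^ (n + 1) * (1 - q ^ (n + 1)) * hoff
    - (1 - q ^ (n + 1)) * hvanish

lemma thetaSum_slater44 (hq0 : q ≠ 0) (hq : ‖q‖ < 1) (n : ℕ) :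
    thetaSum (q ^ (2 : ℤ)) q 2 (-1) (n + 1) n
      = q ^ (n * (n + 1) / 2) * qPoch (-q) q n / qPoch q q (2 * n + 1) := by
  refine eq_div_of_mul_eq (qPoch_ne_zero hq hq _) ?_
  induction n with
  | zero =>
    have hne := qPoch_ne_zero hq hq 1
    rw [Nat.cast_zero, zero_add, thetaSum_eq_of_lt _ _ _ one_lt_two two_pos, invQPoch_zero,
      ← Nat.cast_one, invQPoch_natCast]
    simp [qPoch_zero, hne]
  | succ n ih =>
    rw [show 2 * (n + 1) + 1 = 2 * n + 1 + 1 + 1 by ring, qPoch_succ q q (2 * n + 1 + 1),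
      qPoch_succ q q (2 * n + 1), qPoch_succ (-q),
      add_one_mul_add_two_div_two]
    refine mul_left_cancel₀ (sub_ne_zero.2 (mul_pow_ne_one hq hq n).symm) ?_
    linear_combination (1 - q ^ (2 * n + 2)) * qPoch q q (2 * n + 1)
        * thetaSum_slater44_succ hq0 hq n + q ^ (n + 1) * (1 - q ^ (2 * n + 2)) * ih

lemma hasSum_slater44 (hq0 : q ≠ 0) (hq : ‖q‖ < 1) :
    HasSum (fun n : ℕ => q ^ (n ^ 2 + n) * (q ^ (n * (n + 1) / 2) * qPoch (-q) q n
      / qPoch q q (2 * n + 1))) (Jam q 2 10 / J q 1) := by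
  have hbase : q ^ (2 : ℤ) * (q ^ (2 : ℤ) ^ 2) ^ 2 = q ^ 10 := by
    rw [← zpow_natCast, ← zpow_natCast, ← zpow_mul, ← zpow_add₀ hq0]
    norm_num
  have h := hasSum_pow_mul_thetaSum (y := q ^ (2 : ℤ)) (z := -1) (k := 2) (s := 1) hq0 hq
    (neg_ne_zero.2 one_ne_zero) (zpow_ne_zero 2 hq0) (hbase ▸ norm_pow_lt_one hq (by lia)) le_rfl
  convert h using 2 with n
  · rw [Nat.cast_one, thetaSum_slater44 hq0 hq, one_mul]
  · rw [← tsum_thetaTerm_eq_Jam hq0 hq (by lia) (by lia), hbase, Nat.cast_one, one_mul,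
      neg_one_mul]
    norm_cast
  · rw [J, pow_one]

end Slater

section EulerTerm

variable {p : ℂ}

/-- The `i`-th term of Euler's expansion of `(-p ^ (1 + l); p²)_∞`. -/
noncomputable def eulerTerm (p : ℂ) (l : ℤ) (i : ℕ) : ℂ :=
  p ^ ((i : ℤ) ^ 2 + i * l) / qPoch (p ^ 2) (p ^ 2) i

lemma eulerTerm_eq_thetaTerm (hp0 : p ≠ 0) (l : ℤ) (i : ℕ) :
    eulerTerm p l i = thetaTerm (p ^ (1 + l)) (p ^ 2) i * invQPoch (p ^ 2) i := by
  rw [eulerTerm, invQPoch_natCast, div_eq_mul_inv, thetaTerm, ← zpow_natCast p 2, ← zpow_mul,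
    ← zpow_mul, ← zpow_add₀ hp0, Nat.cast_two, two_mul_mul_sub_one_ediv_two]
  ring_nf

lemma summable_norm_eulerTerm (hp0 : p ≠ 0) (hp : ‖p‖ < 1) (l : ℤ) :
    Summable fun i => ‖eulerTerm p l i‖ := by
  have hx := norm_pow_lt_one hp two_ne_zero
  obtain ⟨C, hC⟩ := exists_norm_invQPoch_le hx
  refine .of_nonneg_of_le (fun _ => norm_nonneg _) (fun i => ?_)
    ((summable_norm_thetaTerm_natCast (zpow_ne_zero (1 + l) hp0)
      (pow_ne_zero 2 hp0) hx).mul_right C)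
  rw [eulerTerm_eq_thetaTerm hp0, norm_mul]
  gcongr
  exact hC i

lemma tsum_eulerTerm (hp0 : p ≠ 0) (hp : ‖p‖ < 1) (l : ℤ) :
    ∑' i, eulerTerm p l i = qPochInf (-p ^ (1 + l)) (p ^ 2) := by
  rw [← tsum_thetaTerm_mul_invQPoch (pow_ne_zero 2 hp0) (norm_pow_lt_one hp two_ne_zero)
    (neg_ne_zero.2 (zpow_ne_zero _ hp0)), neg_neg]
  simp only [eulerTerm_eq_thetaTerm hp0]
  refine Nat.cast_injective.tsum_eq
    (f := fun j : ℤ => thetaTerm (p ^ (1 + l)) (p ^ 2) j * invQPoch (p ^ 2) j) fun j hj => ?_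
  by_contra hneg
  refine hj (mul_eq_zero_of_right _ (invQPoch_of_neg _ (not_le.1 fun hnonneg => hneg ?_)))
  exact ⟨j.toNat, Int.toNat_of_nonneg hnonneg⟩

end EulerTerm

section QuadrupleSum

variable {q : ℂ}

/-- The summand of the quadruple series. -/
noncomputable def quadTerm (q : ℂ) (i j k l : ℕ) : ℂ :=
  q ^ (4 * (i : ℤ) ^ 2 + 4 * (j : ℤ) ^ 2 + 4 * (k : ℤ) ^ 2 + 5 * (l : ℤ) ^ 2 - 4 * (i : ℤ) * (l : ℤ)
      - 4 * (j : ℤ) * (l : ℤ) + 4 * (k : ℤ) * (l : ℤ)) /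
    (qPoch (q ^ 8) (q ^ 8) i * qPoch (q ^ 8) (q ^ 8) j * qPoch (q ^ 8) (q ^ 8) k
      * qPoch (q ^ 8) (q ^ 8) l)

/-- The sum of `quadTerm q i j k l` over `i`, `j` and `k`, in closed form; see
`tsum_quadTerm_fiber`. -/
noncomputable def quadFiber (q : ℂ) (l : ℕ) : ℂ :=
  q ^ (5 * l ^ 2) / qPoch (q ^ 8) (q ^ 8) l
    * (qPochInf (-(q ^ 4) ^ (1 - (l : ℤ))) (q ^ 8) ^ 2
      * qPochInf (-(q ^ 4) ^ (1 + (l : ℤ))) (q ^ 8))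

lemma norm_quadTerm_le (hq0 : q ≠ 0) (hq : ‖q‖ < 1) {C : ℝ}
    (hC : ∀ m, ‖invQPoch (q ^ 8) m‖ ≤ C) (i j k l : ℕ) :
    ‖quadTerm q i j k l‖
      ≤ (C * ‖q‖ ^ i) * ((C * ‖q‖ ^ j) * ((C * ‖q‖ ^ k) * (C * ‖q‖ ^ l))) := by
  have hC0 : 0 ≤ C := (norm_nonneg _).trans (hC 0)
  have hbound (n : ℕ) : ‖(qPoch (q ^ 8) (q ^ 8) n)⁻¹‖ ≤ C := invQPoch_natCast (q ^ 8) n ▸ hC n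
  have hself (n : ℕ) : (n : ℤ) ≤ (n : ℤ) ^ 2 := mod_cast Nat.le_self_pow two_ne_zero n
  have hform : ((i + j + k + l : ℕ) : ℤ) ≤ 4 * (i : ℤ) ^ 2 + 4 * (j : ℤ) ^ 2 + 4 * (k : ℤ) ^ 2
      + 5 * (l : ℤ) ^ 2 - 4 * (i : ℤ) * (l : ℤ) - 4 * (j : ℤ) * (l : ℤ)
      + 4 * (k : ℤ) * (l : ℤ) := by
    have hkl : (0 : ℤ) ≤ (k : ℤ) * l := by positivity
    push_cast
    nlinarith [sq_nonneg ((i : ℤ) - l), sq_nonneg ((j : ℤ) - l), hself i, hself j, hself k, hself l]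
  rw [quadTerm, div_eq_mul_inv, mul_inv, mul_inv, mul_inv, norm_mul, norm_mul, norm_mul, norm_mul,
    norm_zpow]
  calc _ ≤ ‖q‖ ^ (i + j + k + l) * (C * C * C * C) := by
        rw [← zpow_natCast]
        gcongr
        · exact zpow_le_zpow_right_of_le_one₀ (norm_pos_iff.2 hq0) hq.le hform
        all_goals apply hbound
    _ = _ := by ring

lemma summable_quadTerm (hq0 : q ≠ 0) (hq : ‖q‖ < 1) :
    Summable fun p : ℕ × ℕ × ℕ × ℕ => quadTerm q p.1 p.2.1 p.2.2.1 p.2.2.2 := by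
  obtain ⟨C, hC⟩ := exists_norm_invQPoch_le (norm_pow_lt_one hq (n := 8) (by lia))
  have hC0 : 0 ≤ C := (norm_nonneg _).trans (hC 0)
  have hgeom : Summable fun n : ℕ => C * ‖q‖ ^ n :=
    (summable_geometric_of_lt_one (norm_nonneg q) hq).mul_left C
  have hpos : 0 ≤ fun n : ℕ => C * ‖q‖ ^ n := fun n => by positivity
  have hpair := hgeom.mul_of_nonneg hgeom hpos hpos
  have hpair_pos := fun c : ℕ × ℕ => mul_nonneg (hpos c.1) (hpos c.2)
  have htriple := hgeom.mul_of_nonneg hpair hpos hpair_pos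
  have htriple_pos := fun c : ℕ × ℕ × ℕ => mul_nonneg (hpos c.1) (hpair_pos c.2)
  exact .of_norm_bounded (hgeom.mul_of_nonneg htriple hpos htriple_pos)
    fun p => norm_quadTerm_le hq0 hq hC ..

lemma quadTerm_eq_mul_eulerTerm (hq0 : q ≠ 0) (i j k l : ℕ) :
    quadTerm q i j k l = q ^ (5 * l ^ 2) / qPoch (q ^ 8) (q ^ 8) l
      * (eulerTerm (q ^ 4) (-l) i * (eulerTerm (q ^ 4) (-l) j * eulerTerm (q ^ 4) l k)) := by
  have hexp : q ^ (4 * (i : ℤ) ^ 2 + 4 * (j : ℤ) ^ 2 + 4 * (k : ℤ) ^ 2 + 5 * (l : ℤ) ^ 2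
        - 4 * (i : ℤ) * (l : ℤ) - 4 * (j : ℤ) * (l : ℤ) + 4 * (k : ℤ) * (l : ℤ))
      = q ^ (5 * l ^ 2) * ((q ^ 4) ^ ((i : ℤ) ^ 2 + i * (-l : ℤ))
        * ((q ^ 4) ^ ((j : ℤ) ^ 2 + j * (-l : ℤ)) * (q ^ 4) ^ ((k : ℤ) ^ 2 + k * (l : ℤ)))) := by
    simp only [← zpow_natCast q, ← zpow_mul, ← zpow_add₀ hq0]
    congr 1
    push_cast
    ring
  rw [quadTerm, hexp]
  simp only [eulerTerm, ← pow_mul, Nat.reduceMul, div_eq_mul_inv, mul_inv]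
  ring

lemma tsum_quadTerm_fiber (hq0 : q ≠ 0) (hq : ‖q‖ < 1) (l : ℕ) :
    ∑' c : ℕ × ℕ × ℕ, quadTerm q c.1 c.2.1 c.2.2 l = quadFiber q l := by
  have hp0 : q ^ 4 ≠ 0 := pow_ne_zero 4 hq0
  have hp : ‖q ^ 4‖ < 1 := norm_pow_lt_one hq four_ne_zero
  have hneg := summable_norm_eulerTerm hp0 hp (-l)
  have hpos := summable_norm_eulerTerm hp0 hp l
  simp only [quadTerm_eq_mul_eulerTerm hq0]
  rw [tsum_mul_left, ← tsum_mul_tsum_of_summable_norm hneg (hneg.mul_norm hpos),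
    ← tsum_mul_tsum_of_summable_norm hneg hpos, tsum_eulerTerm hp0 hp, tsum_eulerTerm hp0 hp,
    quadFiber, ← sub_eq_add_neg, ← pow_mul, sq (qPochInf _ _), mul_assoc (qPochInf _ _)]

lemma tsum_quadTerm (hq0 : q ≠ 0) (hq : ‖q‖ < 1) :
    ∑' p : ℕ × ℕ × ℕ × ℕ, quadTerm q p.1 p.2.1 p.2.2.1 p.2.2.2 = ∑' l, quadFiber q l := by
  let rotate : ℕ × (ℕ × ℕ × ℕ) ≃ ℕ × ℕ × ℕ × ℕ :=
    { toFun := fun c => (c.2.1, c.2.2.1, c.2.2.2, c.1)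
      invFun := fun p => (p.2.2.2, p.1, p.2.1, p.2.2.1)
      left_inv := fun _ => rfl
      right_inv := fun _ => rfl }
  rw [← rotate.tsum_eq]
  exact ((rotate.summable_iff.2 (summable_quadTerm hq0 hq)).tsum_prod).trans
    (tsum_congr fun l => tsum_quadTerm_fiber hq0 hq l)

end QuadrupleSum

section Parity

variable {q x : ℂ}

lemma qPochInf_div_pow_sq_mul {z : ℂ} (hx0 : x ≠ 0) (hx : ‖x‖ < 1) (hz : z ≠ 0) (m : ℕ) :
    x ^ (m ^ 2 + m) * (qPochInf (z / x ^ m) x ^ 2 * qPochInf (x / z * x ^ m) x)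
      = z ^ (2 * m) * qPoch (x / z) x m * (qPochInf z x ^ 2 * qPochInf (x / z) x) := by
  have hexp : x ^ (m ^ 2 + m) = (x ^ (m * (m + 1) / 2)) ^ 2 := by
    rw [← pow_mul, Nat.div_mul_cancel (Nat.even_mul_succ_self m).two_dvd]
    ring
  calc _ = (qPochInf (z / x ^ m) x * x ^ (m * (m + 1) / 2)) ^ 2
        * qPochInf (x / z * x ^ m) x := by
        rw [hexp]
        ring
    _ = ((-z) ^ m * qPoch (x / z) x m * qPochInf z x) ^ 2 * qPochInf (x / z * x ^ m) x := by
        rw [qPochInf_div_pow_mul hx0 hx hz]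
    _ = _ := by
        rw [← qPoch_mul_qPochInf (x / z) hx m, mul_pow, mul_pow, pow_right_comm, neg_sq, ← pow_mul]
        ring

lemma neg_one_pow_mul_neg_pow (p : ℂ) (m : ℕ) :
    (-1) ^ m * (-p) ^ (3 * m ^ 2) = p ^ (3 * m ^ 2) := by
  have heven : Even (m + 3 * m ^ 2) := by
    rw [show m + 3 * m ^ 2 = m * (m + 1) + 2 * m ^ 2 by ring]
    exact (Nat.even_mul_succ_self m).add (even_two_mul _)
  rw [neg_pow p, ← mul_assoc, ← pow_add, heven.neg_one_pow, one_mul]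

lemma qPochInf_neg_one (hx : ‖x‖ < 1) : qPochInf (-1) x = 2 * qPochInf (-x) x := by
  rw [← qPoch_mul_qPochInf (-1) hx 1, qPoch_succ, qPoch_zero, pow_zero, pow_one, one_mul,
    mul_one, sub_neg_eq_add, one_add_one_eq_two, neg_one_mul]

lemma pow_four_pow_two_mul (q : ℂ) (m : ℕ) : (q ^ 4) ^ (2 * m) = (q ^ 8) ^ m := by
  rw [pow_mul, ← pow_mul q]

lemma quadFiber_two_mul (hq0 : q ≠ 0) (hq : ‖q‖ < 1) (m : ℕ) :
    quadFiber q (2 * m) = qPochInf (-q ^ 4) (q ^ 8) ^ 3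
      * ((-1) ^ m * (-q ^ 4) ^ (3 * m ^ 2) * qPoch (-q ^ 4) ((-q ^ 4) ^ 2) m
        / qPoch ((-q ^ 4) ^ 2) ((-q ^ 4) ^ 2) (2 * m)) := by
  have hp0 : q ^ 4 ≠ 0 := pow_ne_zero 4 hq0
  have hbase : (-q ^ 4) ^ 2 = q ^ 8 := by rw [neg_sq, ← pow_mul]
  have hcube := qPochInf_div_pow_sq_mul (pow_ne_zero 8 hq0) (norm_pow_lt_one hq (by lia))
    (neg_ne_zero.2 hp0) m
  have hdiv : q ^ 8 / -q ^ 4 = -q ^ 4 := by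
    rw [← hbase, sq, mul_div_cancel_right₀ _ (neg_ne_zero.2 hp0)]
  have hneg : -(q ^ 4) ^ (1 - ((2 * m : ℕ) : ℤ)) = -q ^ 4 / (q ^ 8) ^ m := by
    rw [zpow_sub₀ hp0, zpow_one, zpow_natCast, neg_div, pow_four_pow_two_mul]
  have hpos : -(q ^ 4) ^ (1 + ((2 * m : ℕ) : ℤ)) = -q ^ 4 * (q ^ 8) ^ m := by
    rw [zpow_add₀ hp0, zpow_one, zpow_natCast, neg_mul, pow_four_pow_two_mul]
  have hexp : q ^ (5 * (2 * m) ^ 2) = (q ^ 4) ^ (3 * m ^ 2) * (q ^ 8) ^ m ^ 2 := by ring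
  rw [hdiv, pow_mul (-q ^ 4), hbase, pow_add] at hcube
  rw [neg_one_pow_mul_neg_pow, hbase, quadFiber, hneg, hpos, hexp]
  refine mul_left_cancel₀ (pow_ne_zero m (pow_ne_zero 8 hq0)) ?_
  linear_combination (q ^ 4) ^ (3 * m ^ 2) / qPoch (q ^ 8) (q ^ 8) (2 * m) * hcube

lemma quadFiber_two_mul_add_one (hq0 : q ≠ 0) (hq : ‖q‖ < 1) (m : ℕ) :
    quadFiber q (2 * m + 1) = 4 * q ^ 5 * qPochInf (-q ^ 8) (q ^ 8) ^ 3
      * ((q ^ 8) ^ (m ^ 2 + m) * ((q ^ 8) ^ (m * (m + 1) / 2) * qPoch (-q ^ 8) (q ^ 8) m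
        / qPoch (q ^ 8) (q ^ 8) (2 * m + 1))) := by
  have hx : ‖q ^ 8‖ < 1 := norm_pow_lt_one hq (by lia)
  have hcube := qPochInf_div_pow_sq_mul (pow_ne_zero 8 hq0) hx (neg_ne_zero.2 one_ne_zero) m
  have hneg : -(q ^ 4) ^ (1 - ((2 * m + 1 : ℕ) : ℤ)) = -1 / (q ^ 8) ^ m := by
    rw [Nat.cast_succ, sub_add_cancel_right, zpow_neg, zpow_natCast, neg_div, one_div,
      pow_four_pow_two_mul]
  have hpos : -(q ^ 4) ^ (1 + ((2 * m + 1 : ℕ) : ℤ)) = -q ^ 8 * (q ^ 8) ^ m := by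
    rw [add_comm, ← Nat.cast_succ, zpow_natCast, neg_mul, ← pow_succ', ← pow_four_pow_two_mul,
      mul_add_one]
  have hexp : q ^ (5 * (2 * m + 1) ^ 2)
      = q ^ 5 * (q ^ 8) ^ (m ^ 2 + m) * (q ^ 8) ^ (m * (m + 1) / 2) * (q ^ 8) ^ (m ^ 2 + m) := by
    rw [← pow_mul, ← pow_mul, ← pow_add, ← pow_add, ← pow_add]
    congr 1
    have := Nat.div_mul_cancel (Nat.even_mul_succ_self m).two_dvd
    linarith
  rw [div_neg, div_one, qPochInf_neg_one hx, pow_mul, neg_one_sq, one_pow, one_mul] at hcube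
  rw [quadFiber, hneg, hpos, hexp]
  linear_combination q ^ 5 * (q ^ 8) ^ (m ^ 2 + m) * (q ^ 8) ^ (m * (m + 1) / 2)
    / qPoch (q ^ 8) (q ^ 8) (2 * m + 1) * hcube

end Parity

section Products

variable {p x : ℂ}

lemma J_pow (q : ℂ) (k m : ℕ) : J (q ^ k) m = J q (k * m) := by rw [J, J, ← pow_mul]

lemma Jam_pow (q : ℂ) (k a m : ℕ) : Jam (q ^ k) a m = Jam q (k * a) (k * m) := by
  simp only [Jam, ← pow_mul, Nat.mul_sub]

lemma J_ne_zero (hp : ‖p‖ < 1) {m : ℕ} (hm : m ≠ 0) : J p m ≠ 0 :=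
  have h := norm_pow_lt_one hp hm
  qPochInf_ne_zero h h

lemma qPochInf_neg_self_mul_J (hx : ‖x‖ < 1) : qPochInf (-x) x * J x 1 = J x 2 := by
  rw [J, J, pow_one, mul_comm, qPochInf_mul_qPochInf_neg x hx]

lemma qPochInf_eq_mul (a : ℂ) (hx : ‖x‖ < 1) :
    qPochInf a x = qPochInf a (x ^ 2) * qPochInf (a * x) (x ^ 2) := by
  rw [qPochInf_eq_prod a hx two_ne_zero, Finset.prod_range_succ, Finset.prod_range_one, pow_zero,
    mul_one, pow_one]

lemma qPochInf_neg_mul_J_mul_J (hp : ‖p‖ < 1) :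
    qPochInf (-p) (p ^ 2) * J p 1 * J p 4 = J p 2 ^ 2 := by
  have hx := norm_pow_lt_one hp two_ne_zero
  have hone := qPochInf_eq_mul p hp
  have htwo := qPochInf_eq_mul (p ^ 2) hx
  have hneg := qPochInf_mul_qPochInf_neg p hx
  simp only [J, pow_one]
  simp only [← pow_mul, ← sq] at hone htwo hneg
  linear_combination qPochInf (-p) (p ^ 2) * qPochInf (p ^ 4) (p ^ 4) * hone
    + qPochInf (p ^ 2) (p ^ 2) * qPochInf (p ^ 4) (p ^ 4) * hneg - qPochInf (p ^ 2) (p ^ 2) * htwo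

lemma qPochInf_neg_eq_mul (hp : ‖p‖ < 1) :
    qPochInf (-p) (p ^ 2) = qPochInf (-p) (p ^ 10) * qPochInf (-p ^ 3) (p ^ 10)
      * qPochInf (-p ^ 5) (p ^ 10) * qPochInf (-p ^ 7) (p ^ 10) * qPochInf (-p ^ 9) (p ^ 10) := by
  rw [qPochInf_eq_prod (-p) (norm_pow_lt_one hp two_ne_zero) (k := 5) (by lia)]
  simp only [Finset.prod_range_succ, Finset.prod_range_zero, one_mul, neg_mul, ← pow_mul,
    ← pow_succ', Nat.reduceMul, Nat.reduceAdd, mul_zero, pow_one]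

lemma Jam_neg_two_five (hp : ‖p‖ < 1) :
    Jam (-p) 2 5 = qPochInf (p ^ 2) (p ^ 10) * qPochInf (-p ^ 7) (p ^ 10)
      * (qPochInf (-p ^ 3) (p ^ 10) * qPochInf (p ^ 8) (p ^ 10))
      * (qPochInf (-p ^ 5) (p ^ 10) * qPochInf (p ^ 10) (p ^ 10)) := by
  have hbase : ‖-p ^ 5‖ < 1 := norm_neg (p ^ 5) ▸ norm_pow_lt_one hp (by lia)
  have hsplit (a : ℂ) :
      qPochInf a (-p ^ 5) = qPochInf a (p ^ 10) * qPochInf (-(a * p ^ 5)) (p ^ 10) := by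
    rw [qPochInf_eq_mul a hbase, neg_sq, ← pow_mul, mul_neg]
  have hneg (n : ℕ) : -(-p ^ n * p ^ 5) = p ^ (n + 5) := by rw [neg_mul, neg_neg, ← pow_add]
  rw [Jam, neg_sq, (by decide : Odd (5 - 2)).neg_pow, (by decide : Odd 5).neg_pow, hsplit, hsplit,
    hsplit, hneg, hneg, ← pow_add]

lemma Jam_neg_two_five_mul_J (hp : ‖p‖ < 1) :
    Jam (-p) 2 5 * J p 20 = qPochInf (-p) (p ^ 2) * Jam p 1 10 * Jam p 8 20 := by
  have hten : ‖p ^ 10‖ < 1 := norm_pow_lt_one hp (by lia)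
  have hone : qPochInf p (p ^ 10) * qPochInf (-p) (p ^ 10) = qPochInf (p ^ 2) (p ^ 20) := by
    rw [qPochInf_mul_qPochInf_neg p hten, ← pow_mul]
  have hnine : qPochInf (p ^ 9) (p ^ 10) * qPochInf (-p ^ 9) (p ^ 10)
      = qPochInf (p ^ 18) (p ^ 20) := by
    rw [qPochInf_mul_qPochInf_neg _ hten, ← pow_mul, ← pow_mul]
  have hdouble (n : ℕ) :
      qPochInf (p ^ n) (p ^ 10) = qPochInf (p ^ n) (p ^ 20) * qPochInf (p ^ (n + 10)) (p ^ 20) := by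
    rw [qPochInf_eq_mul _ hten, ← pow_add, ← pow_mul]
  rw [Jam_neg_two_five hp, qPochInf_neg_eq_mul hp, hdouble 2, hdouble 8, ← hone, ← hnine]
  simp only [J, Jam, pow_one, Nat.reduceSub, Nat.reduceAdd]
  ring

lemma qPochInf_neg_pow_three_mul_Jam_div (hp : ‖p‖ < 1) :
    qPochInf (-p) (p ^ 2) ^ 3 * (Jam (-p) 2 5 / J (-p) 2)
      = J p 2 ^ 7 * Jam p 1 10 * Jam p 8 20 / (J p 1 ^ 4 * J p 4 ^ 4 * J p 20) := by
  have hone := J_ne_zero hp one_ne_zero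
  have htwo := J_ne_zero hp two_ne_zero
  have hfour := J_ne_zero hp four_ne_zero
  have htwenty := J_ne_zero hp (m := 20) (by lia)
  have hJam : Jam (-p) 2 5 = qPochInf (-p) (p ^ 2) * Jam p 1 10 * Jam p 8 20 / J p 20 :=
    eq_div_of_mul_eq htwenty (Jam_neg_two_five_mul_J hp)
  have hneg : qPochInf (-p) (p ^ 2) = J p 2 ^ 2 / (J p 1 * J p 4) :=
    eq_div_of_mul_eq (mul_ne_zero hone hfour) (by rw [← mul_assoc, qPochInf_neg_mul_J_mul_J hp])
  rw [show J (-p) 2 = J p 2 by rw [J, neg_sq, J], hJam, hneg]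
  field_simp

lemma qPochInf_neg_self_pow_three_mul_div (hx : ‖x‖ < 1) (N : ℂ) :
    qPochInf (-x) x ^ 3 * (N / J x 1) = J x 2 ^ 3 * N / J x 1 ^ 4 := by
  have hone := J_ne_zero hx one_ne_zero
  rw [← qPochInf_neg_self_mul_J hx]
  field_simp

end Products

theorem stmt_19 (q : ℂ) (h0 : 0 < ‖q‖) (h1 : ‖q‖ < 1) :
    (∑' p : ℕ × ℕ × ℕ × ℕ,
      (fun (i j k l : ℕ) =>
        q ^ ((4*(i:ℤ)^2 + 4*(j:ℤ)^2 + 4*(k:ℤ)^2 + 5*(l:ℤ)^2 - 4*(i:ℤ)*(l:ℤ) - 4*(j:ℤ)*(l:ℤ) + 4*(k:ℤ)*(l:ℤ)) : ℤ) /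
          (qPoch (q ^ 8) (q ^ 8) i * qPoch (q ^ 8) (q ^ 8) j * qPoch (q ^ 8) (q ^ 8) k * qPoch (q ^ 8) (q ^ 8) l))
        p.1 p.2.1 p.2.2.1 p.2.2.2)
    = (J q 8)^7 * Jam q 4 40 * Jam q 32 80 / ((J q 4)^4 * (J q 16)^4 * J q 80)
      + 4 * q^5 * (J q 16)^3 * Jam q 16 80 / (J q 8)^4 := by
  have hq0 : q ≠ 0 := norm_pos_iff.1 h0
  have hp0 : -q ^ 4 ≠ 0 := neg_ne_zero.2 (pow_ne_zero 4 hq0)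
  have hp : ‖q ^ 4‖ < 1 := norm_pow_lt_one h1 four_ne_zero
  have hx : ‖q ^ 8‖ < 1 := norm_pow_lt_one h1 (by lia)
  have heven := (hasSum_slater19 hp0 (norm_neg (q ^ 4) ▸ hp)).mul_left (qPochInf (-q ^ 4) (q ^ 8) ^ 3)
  have hodd := (hasSum_slater44 (pow_ne_zero 8 hq0) hx).mul_left
    (4 * q ^ 5 * qPochInf (-q ^ 8) (q ^ 8) ^ 3)
  simp only [← quadFiber_two_mul hq0 h1] at heven
  simp only [← quadFiber_two_mul_add_one hq0 h1] at hodd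
  refine (tsum_quadTerm hq0 h1).trans ((heven.even_add_odd hodd).tsum_eq.trans ?_)
  rw [show q ^ 8 = (q ^ 4) ^ 2 by rw [← pow_mul], qPochInf_neg_pow_three_mul_Jam_div hp,
    ← pow_mul, mul_assoc (4 * q ^ 5), qPochInf_neg_self_pow_three_mul_div hx]
  simp only [J_pow, Jam_pow, Nat.reduceMul]
  ring
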